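/- arXiv:2212.14414 — 6 statements merged into one kernel-verified Lean document; each statement's English description precedes it below -/
import Mathlib

section
/- If γ = Ĉ‖f‖_*/ν² < 1, then the abstract Navier–Stokes variational problem admits exactly one solution (u,p) ∈ V × Q. -/
/-- A Lipschitz estimate for the linearized problem. -/
theorem ns_key {V : Type*} [NormedAddCommGroup V] [InnerProductSpace ℝ V]
    (Z : Submodule ℝ V)
    (ν : ℝ) (hν : 0 < ν) (a : V →L[ℝ] V →L[ℝ] ℝ)
    (hcoer : ∀ v : V, ν * ‖v‖ ^ 2 ≤ a v v)
    (c : V →L[ℝ] V →L[ℝ] V →L[ℝ] ℝ) (C : ℝ) (hC : 0 ≤ C)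
    (hc : ∀ w u v : V, |c w u v| ≤ C * ‖w‖ * ‖u‖ * ‖v‖)
    (hskew : ∀ w ∈ Z, ∀ v : V, c w v v = 0)
    (f : V →L[ℝ] ℝ) (w₁ w₂ u₁ u₂ : V) (hw₁ : w₁ ∈ Z) (hw₂ : w₂ ∈ Z)
    (hu₁ : u₁ ∈ Z) (hu₂ : u₂ ∈ Z)
    (h₁ : ∀ v ∈ Z, a u₁ v + c w₁ u₁ v = f v)
    (h₂ : ∀ v ∈ Z, a u₂ v + c w₂ u₂ v = f v) :
    ‖u₁ - u₂‖ ≤ C * ‖f‖ / ν ^ 2 * ‖w₁ - w₂‖ := by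
  have hb : ν * ‖u₂‖ ≤ ‖f‖ := by
    have e := h₂ u₂ hu₂
    rw [hskew w₂ hw₂] at e
    have e1 := hcoer u₂
    have e2 := (le_abs_self _).trans (f.le_opNorm u₂)
    rcases (norm_nonneg u₂).eq_or_lt with h | h
    · rw [← h]; simp
    · refine le_of_mul_le_mul_right ?_ h
      nlinarith
  have hd : u₁ - u₂ ∈ Z := Z.sub_mem hu₁ hu₂
  have e1 := h₁ _ hd
  have e2 := h₂ _ hd
  have e3 := hskew w₁ hw₁ (u₁ - u₂)
  have e4 := hcoer (u₁ - u₂)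
  have e5 := hc (w₁ - w₂) u₂ (u₁ - u₂)
  have e6 : a (u₁ - u₂) (u₁ - u₂) = - c (w₁ - w₂) u₂ (u₁ - u₂) := by
    have x1 : a (u₁ - u₂) (u₁ - u₂) = a u₁ (u₁ - u₂) - a u₂ (u₁ - u₂) := by
      rw [map_sub a]; rfl
    have x2 : c w₁ (u₁ - u₂) (u₁ - u₂) = c w₁ u₁ (u₁ - u₂) - c w₁ u₂ (u₁ - u₂) := by
      rw [map_sub (c w₁)]; rfl
    have x3 : c (w₁ - w₂) u₂ (u₁ - u₂) = c w₁ u₂ (u₁ - u₂) - c w₂ u₂ (u₁ - u₂) := by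
      rw [map_sub c]; rfl
    linarith
  have e7 := neg_abs_le (c (w₁ - w₂) u₂ (u₁ - u₂))
  generalize hD : ‖u₁ - u₂‖ = D at *
  have hD0 : 0 ≤ D := hD ▸ norm_nonneg _
  have e8 : ν * D ≤ C * ‖w₁ - w₂‖ * ‖u₂‖ := by
    rcases hD0.eq_or_lt with h | h
    · rw [← h]; simp; positivity
    · refine le_of_mul_le_mul_right ?_ h
      nlinarith
  rw [div_mul_eq_mul_div, le_div_iff₀ (by positivity)]
  have e9 : (C * ‖w₁ - w₂‖) * (ν * ‖u₂‖) ≤ (C * ‖w₁ - w₂‖) * ‖f‖ :=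
    mul_le_mul_of_nonneg_left hb (by positivity)
  nlinarith

/-- Solvability of the linearized problem on a complete subspace. -/
theorem ns_linear {V : Type*} [NormedAddCommGroup V] [InnerProductSpace ℝ V]
    (Z : Submodule ℝ V) [CompleteSpace Z]
    (ν : ℝ) (hν : 0 < ν) (A : V →L[ℝ] V →L[ℝ] ℝ)
    (hcoer : ∀ v : V, ν * ‖v‖ ^ 2 ≤ A v v) (f : V →L[ℝ] ℝ) :
    ∃ u : Z, ∀ v ∈ Z, A u v = f v := by
  let B : Z →L[ℝ] Z →L[ℝ] ℝ := A.bilinearComp Z.subtypeL Z.subtypeL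
  have hB : IsCoercive B := ⟨ν, hν, fun u => by
    have := hcoer u
    simp only [B, ContinuousLinearMap.bilinearComp_apply, Submodule.subtypeL_apply]
    rw [← Submodule.coe_norm] at *
    nlinarith⟩
  let r : Z := (InnerProductSpace.toDual ℝ Z).symm (f.comp Z.subtypeL)
  refine ⟨hB.continuousLinearEquivOfBilin.symm r, fun v hv => ?_⟩
  have h := hB.continuousLinearEquivOfBilin_apply
    (hB.continuousLinearEquivOfBilin.symm r) ⟨v, hv⟩
  rw [ContinuousLinearEquiv.apply_symm_apply] at h
  have h2 : inner ℝ r ⟨v, hv⟩ = f v := by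
    simp [r, InnerProductSpace.toDual_symm_apply]
  rw [h2] at h
  exact h.symm

/-- Consequences of the inf-sup condition: existence and uniqueness of the pressure. -/
theorem ns_pressure {V Q : Type*}
    [NormedAddCommGroup V] [InnerProductSpace ℝ V] [CompleteSpace V]
    [NormedAddCommGroup Q] [InnerProductSpace ℝ Q] [CompleteSpace Q]
    (b : V →L[ℝ] Q →L[ℝ] ℝ) (β : ℝ) (hβ : 0 < β)
    (hinfsup : ∀ q : Q, β * ‖q‖ ≤ ⨆ v : {v : V // v ≠ 0}, b (v : V) q / ‖(v : V)‖)
    (g : V →L[ℝ] ℝ) (hg : ∀ v, (∀ q, b v q = 0) → g v = 0) :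
    ∃! p : Q, ∀ v, b v p = g v := by
  have bound : ∀ (q : Q) (M : ℝ), 0 ≤ M → (∀ v, b v q ≤ M * ‖v‖) → β * ‖q‖ ≤ M := by
    intro q M hM h
    refine (hinfsup q).trans (Real.iSup_le (fun v => ?_) hM)
    rw [div_le_iff₀ (norm_pos_iff.mpr v.2)]
    exact h v
  let R : V ≃L[ℝ] (V →L[ℝ] ℝ) := (InnerProductSpace.toDual ℝ V).toContinuousLinearEquiv
  let T : Q →L[ℝ] V := (R.symm : (V →L[ℝ] ℝ) →L[ℝ] V).comp b.flip
  have hT : ∀ q v, inner ℝ (T q) v = b v q := by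
    intro q v
    exact InnerProductSpace.toDual_symm_apply (𝕜 := ℝ) (x := v) (y := b.flip q)
  have hTb : ∀ q, β * ‖q‖ ≤ ‖T q‖ := fun q => bound q _ (norm_nonneg _) fun v => by
    rw [← hT]; exact real_inner_le_norm _ _
  have hanti : AntilipschitzWith (Real.toNNReal β⁻¹) T :=
    ContinuousLinearMap.antilipschitz_of_bound T fun q => by
      rw [Real.coe_toNNReal _ (by positivity), inv_mul_eq_div, le_div_iff₀ hβ, mul_comm]
      exact hTb q
  have hcl : IsClosed (T.range : Set V) := by
    have := hanti.isClosed_range T.uniformContinuous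
    have e : (T.range : Set V) = Set.range T := by ext x; simp
    rw [e]
    exact this
  haveI : CompleteSpace T.range := hcl.completeSpace_coe
  let r : V := (InnerProductSpace.toDual ℝ V).symm g
  have hr : ∀ v, inner ℝ r v = g v := fun v =>
    InnerProductSpace.toDual_symm_apply (𝕜 := ℝ) (x := v) (y := g)
  have hmem : r ∈ T.range := by
    rw [← Submodule.orthogonal_orthogonal T.range, Submodule.mem_orthogonal']
    intro v hv
    rw [hr]
    refine hg v fun q => ?_
    rw [← hT]
    exact (Submodule.mem_orthogonal _ _).1 hv _ ⟨q, rfl⟩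
  obtain ⟨p, hp⟩ := hmem
  refine ⟨p, fun v => ?_, fun p' hp' => ?_⟩
  · rw [← hT, ← hr, ← hp]; rfl
  · refine hanti.injective (ext_inner_right ℝ fun v => ?_)
    rw [hT, hp', ← hr, ← hp]; rfl

/-- If `γ = Ĉ‖f‖_*/ν² < 1`, then the abstract Navier–Stokes
variational problem admits exactly one solution `(u, p) ∈ V × Q`. -/
theorem abstract_navier_stokes_existence_uniqueness
    {V Q : Type*}
    [NormedAddCommGroup V] [InnerProductSpace ℝ V] [CompleteSpace V]
    [NormedAddCommGroup Q] [InnerProductSpace ℝ Q] [CompleteSpace Q]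
    (ν : ℝ) (hν : 0 < ν)
    (a : V →L[ℝ] V →L[ℝ] ℝ)
    (hcoer : ∀ v : V, ν * ‖v‖ ^ 2 ≤ a v v)
    (b : V →L[ℝ] Q →L[ℝ] ℝ)
    (c : V →L[ℝ] V →L[ℝ] V →L[ℝ] ℝ)
    (Chat : ℝ)
    (hc : ∀ w u v : V, |c w u v| ≤ Chat * ‖w‖ * ‖u‖ * ‖v‖)
    (hskew : ∀ w : V, (∀ q : Q, b w q = 0) → ∀ v : V, c w v v = 0)
    (f : V →L[ℝ] ℝ)
    (β : ℝ) (hβ : 0 < β)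
    (hinfsup : ∀ q : Q, β * ‖q‖ ≤ ⨆ v : {v : V // v ≠ 0}, b (v : V) q / ‖(v : V)‖)
    (hγ : Chat * ‖f‖ / ν ^ 2 < 1) :
    ∃! up : V × Q,
      (∀ v : V, a up.1 v + c up.1 up.1 v + b v up.2 = f v) ∧
      (∀ q : Q, b up.1 q = 0) := by
  classical
  obtain ⟨C, hC, hc', hγ'⟩ : ∃ C : ℝ, 0 ≤ C ∧
      (∀ w u v : V, |c w u v| ≤ C * ‖w‖ * ‖u‖ * ‖v‖) ∧ C * ‖f‖ / ν ^ 2 < 1 := by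
    rcases le_total 0 Chat with h | h
    · exact ⟨Chat, h, hc, hγ⟩
    · refine ⟨0, le_rfl, fun w u v => (hc w u v).trans ?_, by simp⟩
      gcongr
  let Z : Submodule ℝ V := b.ker
  have hZ : ∀ w, w ∈ Z ↔ ∀ q, b w q = 0 := by
    intro w
    constructor
    · intro h q
      have h' : b w = 0 := h
      simp [h']
    · intro h
      have h' : b w = 0 := ContinuousLinearMap.ext h
      exact h'
  have hsk : ∀ w ∈ Z, ∀ v : V, c w v v = 0 := fun w hw => hskew w ((hZ w).1 hw)
  haveI : CompleteSpace Z := (ContinuousLinearMap.isClosed_ker b).completeSpace_coe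
  have hlin : ∀ w : Z, ∃ u : Z, ∀ v ∈ Z, a u v + c w u v = f v := fun w =>
    ns_linear Z ν hν (a + c w) (fun v => by
      have := hcoer v
      simpa [hsk w w.2 v] using this) f
  choose T hT using hlin
  have hK : 0 ≤ C * ‖f‖ / ν ^ 2 := by positivity
  have key := ns_key Z ν hν a hcoer c C hC hc' hsk f
  have hcontr : ContractingWith (Real.toNNReal (C * ‖f‖ / ν ^ 2)) T := by
    refine ⟨by simpa using hγ', LipschitzWith.of_dist_le_mul fun x y => ?_⟩
    rw [Real.coe_toNNReal _ hK, dist_eq_norm, dist_eq_norm]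
    exact key x y (T x) (T y) x.2 y.2 (T x).2 (T y).2 (hT x) (hT y)
  obtain ⟨u, hu⟩ : ∃ u, T u = u := ⟨_, hcontr.fixedPoint_isFixedPt⟩
  have hu' : ∀ v ∈ Z, a u v + c u u v = f v := by
    have := hT u
    rwa [hu] at this
  obtain ⟨p, hp, hpu⟩ := ns_pressure b β hβ hinfsup (f - a u - c u u) (fun v hv => by
    have := hu' v ((hZ v).2 hv)
    simp only [ContinuousLinearMap.sub_apply]
    linarith)
  refine ⟨(u, p), ⟨fun v => ?_, (hZ u).1 u.2⟩, ?_⟩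
  · have := hp v
    simp only [ContinuousLinearMap.sub_apply] at this
    simp only
    linarith
  · rintro ⟨u', p'⟩ ⟨h1, h2⟩
    simp only at h1 h2
    have hz : u' ∈ Z := (hZ u').2 h2
    have h3 := key u' u u' u hz u.2 hz u.2 (fun v hv => by
      have := h1 v
      rw [(hZ v).1 hv] at this
      linarith) hu'
    have h4 : u' = u := by
      rw [← sub_eq_zero, ← norm_eq_zero]
      have := norm_nonneg (u' - (u : V))
      nlinarith
    subst h4
    have h5 : p' = p := hpu p' fun v => by
      have := h1 v
      simp only [ContinuousLinearMap.sub_apply]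
      linarith
    rw [h5]
end

section
/- For every w ∈ Z there exists a unique T(w) ∈ Z such that a(T(w),v) + c(w;T(w),v) = f(v) for all v ∈ Z. Moreover ν‖T(w)‖_V ≤ ‖f‖_* for every w ∈ Z, and ‖T(w₁) − T(w₂)‖_V ≤ γ‖w₁ − w₂‖_V for all w₁, w₂ ∈ Z; in particular, if γ < 1 then T is a contraction of Z into the closed ball of radius ‖f‖_*/ν. -/
/-- For every `w ∈ Z` there exists a unique `T w ∈ Z` such that
`a(T w, v) + c(w; T w, v) = f(v)` for all `v ∈ Z`.  Moreover `ν‖T w‖ ≤ ‖f‖_*`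
for every `w ∈ Z`, and `‖T w₁ − T w₂‖ ≤ γ‖w₁ − w₂‖` for all `w₁, w₂ ∈ Z`;
in particular, if `γ < 1` then `T` is a contraction of `Z` into the closed
ball of radius `‖f‖_*/ν`. -/
theorem abstract_navier_stokes_fixed_point_map
    {V Q : Type*}
    [NormedAddCommGroup V] [InnerProductSpace ℝ V] [CompleteSpace V]
    [NormedAddCommGroup Q] [InnerProductSpace ℝ Q] [CompleteSpace Q]
    (ν : ℝ) (hν : 0 < ν)
    (a : V →L[ℝ] V →L[ℝ] ℝ)
    (hcoer : ∀ v : V, ν * ‖v‖ ^ 2 ≤ a v v)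
    (b : V →L[ℝ] Q →L[ℝ] ℝ)
    (c : V →L[ℝ] V →L[ℝ] V →L[ℝ] ℝ)
    (Chat : ℝ)
    (hc : ∀ w u v : V, |c w u v| ≤ Chat * ‖w‖ * ‖u‖ * ‖v‖)
    (Z : Set V) (hZ : Z = {v : V | ∀ q : Q, b v q = 0})
    (hskew : ∀ w ∈ Z, ∀ v : V, c w v v = 0)
    (f : V →L[ℝ] ℝ)
    (γ : ℝ) (hγdef : γ = Chat * ‖f‖ / ν ^ 2) :
    ∃ T : V → V,
      (∀ w ∈ Z,
        T w ∈ Z ∧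
        (∀ v ∈ Z, a (T w) v + c w (T w) v = f v) ∧
        (∀ z ∈ Z, (∀ v ∈ Z, a z v + c w z v = f v) → z = T w) ∧
        ν * ‖T w‖ ≤ ‖f‖) ∧
      (∀ w₁ ∈ Z, ∀ w₂ ∈ Z, ‖T w₁ - T w₂‖ ≤ γ * ‖w₁ - w₂‖) ∧
      (γ < 1 → ∀ w ∈ Z, T w ∈ Metric.closedBall (0 : V) (‖f‖ / ν)) := by
  classical
  have hmem : ∀ v : V, v ∈ Z ↔ v ∈ b.ker := by
    intro v
    rw [hZ]
    simp [ContinuousLinearMap.ext_iff]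
  have hsub : ∀ u ∈ Z, ∀ v ∈ Z, u - v ∈ Z := by
    intro u hu v hv
    rw [hmem] at *
    exact Submodule.sub_mem _ hu hv
  have hclosed : IsClosed (b.ker : Set V) := b.isClosed_ker
  have : CompleteSpace b.ker := hclosed.completeSpace_coe
  have hex : ∀ w ∈ Z, ∃ u ∈ Z, ∀ v ∈ Z, a u v + c w u v = f v := by
    intro w hw
    let B : b.ker →L[ℝ] b.ker →L[ℝ] ℝ :=
      (a + c w).bilinearComp b.ker.subtypeL b.ker.subtypeL
    have hB : ∀ u v : b.ker, B u v = a u v + c w u v := by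
      intro u v
      simp [B]
    have hco : IsCoercive B := by
      refine ⟨ν, hν, fun u => ?_⟩
      rw [hB, hskew w hw, add_zero]
      have := hcoer u
      simp only [Submodule.coe_norm] at *
      nlinarith
    let g : b.ker := (InnerProductSpace.toDual ℝ b.ker).symm (f.comp b.ker.subtypeL)
    refine ⟨(hco.continuousLinearEquivOfBilin.symm g : b.ker), ?_, ?_⟩
    · rw [hmem]; exact Subtype.property _
    · intro v hv
      rw [hmem] at hv
      have h1 := hco.continuousLinearEquivOfBilin_apply
        (hco.continuousLinearEquivOfBilin.symm g) ⟨v, hv⟩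
      rw [ContinuousLinearEquiv.apply_symm_apply, hB,
        InnerProductSpace.toDual_symm_apply] at h1
      exact h1.symm
  have key : ∀ x M : ℝ, 0 ≤ x → 0 ≤ M → ν * x ^ 2 ≤ M * x → ν * x ≤ M := by
    intro x M hx hM h
    rcases hx.eq_or_lt with h0 | h0
    · rw [← h0]; simpa using hM
    · refine le_of_mul_le_mul_right ?_ h0
      nlinarith
  have hChat : ∀ x : V, 0 ≤ Chat * ‖x‖ := by
    intro x
    rcases eq_or_ne x 0 with h | h
    · simp [h]
    · have hx : 0 < ‖x‖ := norm_pos_iff.mpr h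
      have h1 := (abs_nonneg _).trans (hc x x x)
      exact nonneg_of_mul_nonneg_left (nonneg_of_mul_nonneg_left h1 hx) hx
  choose! T hTZ hT using hex
  have hbd : ∀ w ∈ Z, ν * ‖T w‖ ≤ ‖f‖ := by
    intro w hw
    apply key _ _ (norm_nonneg _) (norm_nonneg _)
    have h1 := hT w hw _ (hTZ w hw)
    rw [hskew w hw, add_zero] at h1
    calc _ ≤ _ := hcoer (T w)
      _ = f (T w) := h1
      _ ≤ ‖f (T w)‖ := Real.le_norm_self _
      _ ≤ _ := f.le_opNorm _
  refine ⟨T, fun w hw => ⟨hTZ w hw, hT w hw, ?_, hbd w hw⟩, ?_, ?_⟩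
  · intro z hz h
    have hd := hsub z hz _ (hTZ w hw)
    have h1 := h _ hd
    have h2 := hT w hw _ hd
    have h3 := hskew w hw (z - T w)
    have h4 := hcoer (z - T w)
    have h5 : a (z - T w) (z - T w) = 0 := by
      have e1 : a (z - T w) (z - T w) = a z (z - T w) - a (T w) (z - T w) := by
        rw [a.map_sub]; rfl
      have e2 : c w (z - T w) (z - T w) = c w z (z - T w) - c w (T w) (z - T w) := by
        rw [(c w).map_sub]; rfl
      linarith
    rw [h5] at h4
    have h6 : ‖z - T w‖ ^ 2 ≤ 0 := by
      by_contra hh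
      push Not at hh
      nlinarith [mul_pos hν hh]
    have h7 : ‖z - T w‖ = 0 := by
      nlinarith [norm_nonneg (z - T w)]
    exact sub_eq_zero.mp (norm_eq_zero.mp h7)
  · intro w₁ h₁ w₂ h₂
    have hd := hsub _ (hTZ w₁ h₁) _ (hTZ w₂ h₂)
    have e1 := hT w₁ h₁ _ hd
    have e2 := hT w₂ h₂ _ hd
    have h3 := hskew w₁ h₁ (T w₁ - T w₂)
    have h4 := hcoer (T w₁ - T w₂)
    have h5 := hc (w₁ - w₂) (T w₂) (T w₁ - T w₂)
    have hb2 := hbd w₂ h₂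
    have hC := hChat (w₁ - w₂)
    generalize hdd : T w₁ - T w₂ = d at *
    have i1 : a d d = a (T w₁) d - a (T w₂) d := by
      nth_rewrite 1 [← hdd]
      rw [a.map_sub]; rfl
    have i2 : c w₁ d d = c w₁ (T w₁) d - c w₁ (T w₂) d := by
      nth_rewrite 1 [← hdd]
      rw [(c w₁).map_sub]; rfl
    have i3 : c (w₁ - w₂) (T w₂) d = c w₁ (T w₂) d - c w₂ (T w₂) d := by
      have hcs : c (w₁ - w₂) = c w₁ - c w₂ := map_sub c w₁ w₂
      rw [hcs]; rfl
    have h6 : ν * ‖d‖ ≤ Chat * ‖w₁ - w₂‖ * ‖T w₂‖ := by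
      apply key _ _ (norm_nonneg _) (mul_nonneg hC (norm_nonneg _))
      have := neg_abs_le (c (w₁ - w₂) (T w₂) d)
      linarith
    have h7 := mul_le_mul_of_nonneg_left hb2 hC
    have h8 := mul_le_mul_of_nonneg_left h6 hν.le
    rw [hγdef, div_mul_eq_mul_div, le_div_iff₀ (by positivity)]
    linarith
  · intro _ w hw
    rw [mem_closedBall_zero_iff, le_div_iff₀ hν]
    linarith [hbd w hw]
end

section
/- If γ_h ≤ r for some r < 1, then there exists exactly one pair (u_h,p_h) ∈ V_h × Q_h such that a_h(u_h,v_h) + c̃_h(u_h;u_h,v_h) + b(v_h,p_h) = f_h(v_h) for all v_h ∈ V_h and b(u_h,q_h) = 0 for all q_h ∈ Q_h; moreover this solution satisfies α_*ν‖u_h‖_V ≤ ‖f_h‖_{*,h}. -/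
/-- If `γ_h ≤ r` for some `r < 1`, then there exists exactly one
pair `(u_h, p_h) ∈ V_h × Q_h` such that
`a_h(u_h,v_h) + c̃_h(u_h;u_h,v_h) + b(v_h,p_h) = f_h(v_h)` for all `v_h ∈ V_h`
and `b(u_h,q_h) = 0` for all `q_h ∈ Q_h`; moreover this solution satisfies
`α_* ν ‖u_h‖_V ≤ ‖f_h‖_{*,h}`. -/
theorem discrete_navier_stokes_wellposedness
    {V Q : Type*}
    [NormedAddCommGroup V] [InnerProductSpace ℝ V] [CompleteSpace V]
    [NormedAddCommGroup Q] [InnerProductSpace ℝ Q] [CompleteSpace Q]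
    (b : V →L[ℝ] Q →L[ℝ] ℝ)
    (Vh : Subspace ℝ V) (Qh : Subspace ℝ Q)
    [FiniteDimensional ℝ Vh] [FiniteDimensional ℝ Qh]
    (ν αstar : ℝ) (hν : 0 < ν) (hαstar : 0 < αstar)
    (ah : Vh →ₗ[ℝ] Vh →ₗ[ℝ] ℝ)
    (hcoer : ∀ v : Vh, αstar * ν * ‖v‖ ^ 2 ≤ ah v v)
    (ch : Vh →ₗ[ℝ] Vh →ₗ[ℝ] Vh →ₗ[ℝ] ℝ)
    (Chath : ℝ)
    (hch : ∀ w u v : Vh, |ch w u v| ≤ Chath * ‖w‖ * ‖u‖ * ‖v‖)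
    (hskew : ∀ w v : Vh, ch w v v = 0)
    (fh : Vh →L[ℝ] ℝ)
    (βh : ℝ) (hβh : 0 < βh)
    (hinfsup : ∀ qh : Qh,
      βh * ‖qh‖ ≤ ⨆ vh : {v : Vh // v ≠ 0}, b ((vh : Vh) : V) (qh : Q) / ‖(vh : Vh)‖)
    (r : ℝ) (hr : r < 1)
    (hγh : Chath * ‖fh‖ / (αstar ^ 2 * ν ^ 2) ≤ r) :
    (∃! uhph : Vh × Qh,
        (∀ vh : Vh,
          ah uhph.1 vh + ch uhph.1 uhph.1 vh + b (vh : V) (uhph.2 : Q) = fh vh) ∧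
        (∀ qh : Qh, b (uhph.1 : V) (qh : Q) = 0)) ∧
    (∀ uhph : Vh × Qh,
        ((∀ vh : Vh,
            ah uhph.1 vh + ch uhph.1 uhph.1 vh + b (vh : V) (uhph.2 : Q) = fh vh) ∧
         (∀ qh : Qh, b (uhph.1 : V) (qh : Q) = 0)) →
        αstar * ν * ‖uhph.1‖ ≤ ‖fh‖) := by
  have hm : 0 < αstar * ν := mul_pos hαstar hν
  -- a priori bound
  have hbd : ∀ w u : Vh, ∀ p : Qh,
      (∀ v : Vh, ah u v + ch w u v + b (v : V) (p : Q) = fh v) →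
      (∀ q : Qh, b (u : V) (q : Q) = 0) → αstar * ν * ‖u‖ ≤ ‖fh‖ := by
    intro w u p h1 h2
    have e := h1 u
    rw [hskew, h2 p] at e
    have hf : fh u ≤ ‖fh‖ * ‖u‖ := (le_abs_self _).trans (fh.le_opNorm u)
    have hc := hcoer u
    rcases (norm_nonneg u).eq_or_lt with h | h
    · rw [← h, mul_zero]; exact norm_nonneg fh
    · refine le_of_mul_le_mul_right ?_ h
      nlinarith
  -- contraction estimate
  have hcon : ∀ w1 w2 u1 u2 : Vh, ∀ p1 p2 : Qh,
      (∀ v : Vh, ah u1 v + ch w1 u1 v + b (v : V) (p1 : Q) = fh v) →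
      (∀ q : Qh, b (u1 : V) (q : Q) = 0) →
      (∀ v : Vh, ah u2 v + ch w2 u2 v + b (v : V) (p2 : Q) = fh v) →
      (∀ q : Qh, b (u2 : V) (q : Q) = 0) →
      ‖u1 - u2‖ ≤ max r 0 * ‖w1 - w2‖ := by
    intro w1 w2 u1 u2 p1 p2 h1 k1 h2 k2
    have hb2 := hbd w2 u2 p2 h2 k2
    have kd : ∀ q : Qh, b ((u1 - u2 : Vh) : V) (q : Q) = 0 := by
      intro q; simp [k1 q, k2 q]
    have e1 := h1 (u1 - u2)
    have e2 := h2 (u1 - u2)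
    rw [kd] at e1 e2
    have hs := hskew w1 (u1 - u2)
    have hc := hcoer (u1 - u2)
    have hB := hch (w1 - w2) u2 (u1 - u2)
    have hB' := neg_le_of_abs_le hB
    have x1 : ah (u1 - u2) (u1 - u2) = ah u1 (u1 - u2) - ah u2 (u1 - u2) := by
      rw [map_sub ah, LinearMap.sub_apply]
    have x2 : ch w1 (u1 - u2) (u1 - u2) = ch w1 u1 (u1 - u2) - ch w1 u2 (u1 - u2) := by
      rw [map_sub (ch w1), LinearMap.sub_apply]
    have x3 : ch (w1 - w2) u2 (u1 - u2) = ch w1 u2 (u1 - u2) - ch w2 u2 (u1 - u2) := by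
      rw [map_sub ch, LinearMap.sub_apply, LinearMap.sub_apply]
    have hd0 := hch (u1 - u2) (u1 - u2) (u1 - u2)
    rw [hskew, abs_zero] at hd0
    generalize hd : u1 - u2 = d at *
    have hw := norm_nonneg (w1 - w2)
    rcases (norm_nonneg d).eq_or_lt with h | h
    · rw [← h]; positivity
    have hC : 0 ≤ Chath := by
      by_contra hneg
      push Not at hneg
      have : 0 < ‖d‖ * ‖d‖ * ‖d‖ := by positivity
      nlinarith
    have step1 : αstar * ν * ‖d‖ ≤ Chath * ‖w1 - w2‖ * ‖u2‖ := by
      refine le_of_mul_le_mul_right ?_ h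
      nlinarith
    have hγ : Chath * ‖fh‖ ≤ max r 0 * (αstar * ν) ^ 2 := by
      have : Chath * ‖fh‖ ≤ r * (αstar ^ 2 * ν ^ 2) := (div_le_iff₀ (by positivity)).1 hγh
      have h3 : r * (αstar * ν) ^ 2 ≤ max r 0 * (αstar * ν) ^ 2 :=
        mul_le_mul_of_nonneg_right (le_max_left _ _) (by positivity)
      nlinarith
    have hm2 : 0 < (αstar * ν) ^ 2 := by positivity
    refine le_of_mul_le_mul_left ?_ hm2
    calc (αstar * ν) ^ 2 * ‖d‖ = αstar * ν * (αstar * ν * ‖d‖) := by ring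
      _ ≤ αstar * ν * (Chath * ‖w1 - w2‖ * ‖u2‖) := by gcongr
      _ = Chath * ‖w1 - w2‖ * (αstar * ν * ‖u2‖) := by ring
      _ ≤ Chath * ‖w1 - w2‖ * ‖fh‖ := by gcongr
      _ = (Chath * ‖fh‖) * ‖w1 - w2‖ := by ring
      _ ≤ (max r 0 * (αstar * ν) ^ 2) * ‖w1 - w2‖ := by gcongr
      _ = _ := by ring
  -- pressure injectivity
  have hp : ∀ p : Qh, (∀ v : Vh, b (v : V) (p : Q) = 0) → p = 0 := by
    intro p h
    have h' := hinfsup p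
    simp only [h, zero_div, Real.iSup_const_zero] at h'
    have : ‖p‖ ≤ 0 := by
      by_contra hneg
      push Not at hneg
      nlinarith [mul_pos hβh hneg]
    exact norm_le_zero_iff.1 this
  -- linear solvability
  have hlin : ∀ w : Vh, ∃ x : Vh × Qh,
      (∀ v : Vh, ah x.1 v + ch w x.1 v + b (v : V) (x.2 : Q) = fh v) ∧
      (∀ q : Qh, b (x.1 : V) (q : Q) = 0) := by
    intro w
    let B : Vh →ₗ[ℝ] Qh →ₗ[ℝ] ℝ := LinearMap.mk₂ ℝ (fun v q => b (v : V) (q : Q))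
      (by intros; simp) (by intros; simp) (by intros; simp) (by intros; simp)
    let L : (Vh × Qh) →ₗ[ℝ] (Module.Dual ℝ Vh × Module.Dual ℝ Qh) :=
      LinearMap.prod (LinearMap.coprod (ah + ch w) B.flip) (B ∘ₗ LinearMap.fst ℝ Vh Qh)
    have L1 : ∀ x v, (L x).1 v = ah x.1 v + ch w x.1 v + b (v : V) (x.2 : Q) := by
      intro x v; rfl
    have L2 : ∀ x q, (L x).2 q = b (x.1 : V) (q : Q) := by
      intro x q; rfl
    have hinj : Function.Injective L := by
      rw [injective_iff_map_eq_zero]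
      intro x hx
      have y1 : ∀ v, ah x.1 v + ch w x.1 v + b (v : V) (x.2 : Q) = 0 := by
        intro v; rw [← L1, hx]; rfl
      have y2 : ∀ q : Qh, b (x.1 : V) (q : Q) = 0 := by
        intro q; rw [← L2, hx]; rfl
      have hu : x.1 = 0 := by
        have e := y1 x.1
        rw [hskew, y2] at e
        have hc := hcoer x.1
        have : ‖x.1‖ ^ 2 ≤ 0 := by
          by_contra hneg
          push Not at hneg
          nlinarith [mul_pos hm hneg]
        have h0 : ‖x.1‖ = 0 := by
          exact pow_eq_zero_iff (two_ne_zero) |>.1 (le_antisymm this (by positivity))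
        exact norm_eq_zero.1 h0
      have hq : x.2 = 0 := by
        apply hp
        intro v
        have e := y1 v
        rw [hu] at e
        simpa using e
      exact Prod.ext hu hq
    have hdim : Module.finrank ℝ (Vh × Qh) =
        Module.finrank ℝ (Module.Dual ℝ Vh × Module.Dual ℝ Qh) := by
      rw [Module.finrank_prod, Module.finrank_prod, Subspace.dual_finrank_eq,
        Subspace.dual_finrank_eq]
    have hsurj := (LinearMap.injective_iff_surjective_of_finrank_eq_finrank hdim).1 hinj
    obtain ⟨x, hx⟩ := hsurj ((fh : Vh →ₗ[ℝ] ℝ), 0)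
    refine ⟨x, fun v => ?_, fun q => ?_⟩
    · rw [← L1, hx]; rfl
    · rw [← L2, hx]; rfl
  choose S hS1 hS2 using hlin
  have hK : ContractingWith (Real.toNNReal r) (fun w => (S w).1) := by
    refine ⟨by simpa using hr, LipschitzWith.of_dist_le_mul fun w1 w2 => ?_⟩
    rw [dist_eq_norm, dist_eq_norm, Real.coe_toNNReal']
    exact hcon w1 w2 _ _ _ _ (hS1 w1) (hS2 w1) (hS1 w2) (hS2 w2)
  have : CompleteSpace Vh := FiniteDimensional.complete ℝ Vh
  have hfix : (S (hK.fixedPoint)).1 = hK.fixedPoint := hK.fixedPoint_isFixedPt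
  refine ⟨?_, fun x hx => hbd x.1 x.1 x.2 hx.1 hx.2⟩
  generalize hK.fixedPoint = u at hfix
  have g1 := hS1 u
  have g2 := hS2 u
  refine existsUnique_of_exists_of_unique ⟨S u, ?_, g2⟩ ?_
  · intro v
    have := g1 v
    rw [hfix] at this ⊢
    exact this
  · rintro ⟨u1, p1⟩ ⟨u2, p2⟩ ⟨h1, k1⟩ ⟨h2, k2⟩
    simp only at h1 k1 h2 k2
    have hE := hcon u1 u2 u1 u2 p1 p2 h1 k1 h2 k2
    have hlt : max r 0 < 1 := max_lt hr one_pos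
    have hn : ‖u1 - u2‖ ≤ 0 := by
      by_contra hneg
      push Not at hneg
      nlinarith
    have hu : u1 = u2 := sub_eq_zero.1 (norm_le_zero_iff.1 hn)
    subst hu
    have hpp : p1 - p2 = 0 := by
      apply hp
      intro v
      have e1 := h1 v
      have e2 := h2 v
      simp only [Submodule.coe_sub, map_sub]
      linarith
    rw [sub_eq_zero.1 hpp]
end

section
/- There exist constants C₁ > 0 and C₂ > 0, depending only on ν, Ĉ, β, the continuity constant of b, γ and θ, such that C₁·(ν‖Φ‖_V² + ‖ψ‖_Q²) ≤ ν‖e_u‖_V² + ‖e_p‖_Q² ≤ C₂·(ν‖Φ‖_V² + ‖ψ‖_Q²). -/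
open scoped RealInnerProductSpace

set_option maxHeartbeats 1600000 in
/-- There exist constants `C₁ > 0` and `C₂ > 0`, depending only on
`ν`, `Ĉ`, `β`, the continuity constant of `b`, `γ` and `θ`, such that
`C₁·(ν‖Φ‖² + ‖ψ‖²) ≤ ν‖e_u‖² + ‖e_p‖² ≤ C₂·(ν‖Φ‖² + ‖ψ‖²)`. -/
theorem norm_equivalence_a_posteriori
    {V Q : Type*}
    [NormedAddCommGroup V] [InnerProductSpace ℝ V] [CompleteSpace V]
    [NormedAddCommGroup Q] [InnerProductSpace ℝ Q] [CompleteSpace Q]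
    (ν Chat β Cb γ θ : ℝ)
    (hν : 0 < ν) (hβ : 0 < β) (hγ : γ < 1) (hθ0 : 0 ≤ θ) (hθ1 : θ < 1) :
    ∃ C₁ > (0 : ℝ), ∃ C₂ > (0 : ℝ),
      ∀ (b : V →L[ℝ] Q →L[ℝ] ℝ)
        (c : V →L[ℝ] V →L[ℝ] V →L[ℝ] ℝ)
        (f : V →L[ℝ] ℝ)
        (u uh Φ : V) (p ph ψ : Q),
        ‖b‖ ≤ Cb →
        (∀ q : Q, β * ‖q‖ ≤ ⨆ v : {v : V // v ≠ 0}, b (v : V) q / ‖(v : V)‖) →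
        (∀ w x v : V, |c w x v| ≤ Chat * ‖w‖ * ‖x‖ * ‖v‖) →
        (∀ w : V, (∀ q : Q, b w q = 0) → ∀ v : V, c w v v = 0) →
        Chat * ‖f‖ / ν ^ 2 = γ →
        (∀ v : V, ν * ⟪u, v⟫ + c u u v + b v p = f v) →
        (∀ q : Q, b u q = 0) →
        (∀ q : Q, b uh q = 0) →
        Chat * ‖uh‖ ≤ θ * ν →
        (∀ v : V, ∀ q : Q,
          ν * ⟪Φ, v⟫ + ⟪ψ, q⟫ =
            ν * ⟪u - uh, v⟫ + b v (p - ph) + b (u - uh) q +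
              (c u u v - c uh uh v)) →
        C₁ * (ν * ‖Φ‖ ^ 2 + ‖ψ‖ ^ 2) ≤ ν * ‖u - uh‖ ^ 2 + ‖p - ph‖ ^ 2 ∧
        ν * ‖u - uh‖ ^ 2 + ‖p - ph‖ ^ 2 ≤ C₂ * (ν * ‖Φ‖ ^ 2 + ‖ψ‖ ^ 2) := by
  obtain ⟨g, hg⟩ : ∃ g, g = 1 - max γ 0 := ⟨_, rfl⟩
  obtain ⟨K, hK⟩ : ∃ K, K = max Chat 0 := ⟨_, rfl⟩
  obtain ⟨M, hM⟩ : ∃ M, M = max Cb 0 := ⟨_, rfl⟩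
  have hg0 : 0 < g := by
    have : max γ 0 < 1 := max_lt hγ one_pos
    linarith
  have hg1 : g ≤ 1 := by
    have : 0 ≤ max γ 0 := le_max_right _ _
    linarith
  have hK0 : 0 ≤ K := hK ▸ le_max_right _ _
  have hM0 : 0 ≤ M := hM ▸ le_max_right _ _
  refine ⟨1 / (18 + 2 * M ^ 2 / ν), by positivity, 1 / g ^ 2 + 16 * ν / (g ^ 2 * β ^ 2),
    by positivity, ?_⟩
  intro b c f u uh Φ p ph ψ hb hinf hc hskew hf hu hub huhb huh hR
  have hcK : ∀ w x v : V, |c w x v| ≤ K * ‖w‖ * ‖x‖ * ‖v‖ := by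
    intro w x v
    refine (hc w x v).trans ?_
    have : Chat ≤ K := hK ▸ le_max_left _ _
    gcongr
  have hfK : K * ‖f‖ ≤ (1 - g) * ν ^ 2 := by
    have h1 : Chat * ‖f‖ = γ * ν ^ 2 := by
      rw [← hf]; field_simp
    have hgg : 1 - g = max γ 0 := by linarith
    rw [hgg, hK]
    rcases le_total Chat 0 with h | h
    · rw [max_eq_right h, zero_mul]
      positivity
    · rw [max_eq_left h, h1]
      gcongr
      exact le_max_left _ _
  have huhK : K * ‖uh‖ ≤ ν := by
    rw [hK]
    rcases le_total Chat 0 with h | h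
    · rw [max_eq_right h, zero_mul]
      exact hν.le
    · rw [max_eq_left h]
      nlinarith
  have hu1 : ν * ‖u‖ ≤ ‖f‖ := by
    have h1 := hu u
    rw [hskew u hub u, hub p, real_inner_self_eq_norm_sq] at h1
    have h2 : f u ≤ ‖f‖ * ‖u‖ := (le_abs_self _).trans (f.le_opNorm u)
    rcases (norm_nonneg u).eq_or_lt with h | h
    · rw [← h]; simp
    · have : (ν * ‖u‖) * ‖u‖ ≤ ‖f‖ * ‖u‖ := by nlinarith
      exact le_of_mul_le_mul_right this h
  have huK : K * ‖u‖ ≤ (1 - g) * ν := by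
    have h1 : K * (ν * ‖u‖) ≤ K * ‖f‖ := by gcongr
    have : (K * ‖u‖) * ν ≤ ((1 - g) * ν) * ν := by nlinarith
    exact le_of_mul_le_mul_right this hν
  obtain ⟨e, he⟩ : ∃ e, e = u - uh := ⟨_, rfl⟩
  obtain ⟨r, hr⟩ : ∃ r, r = p - ph := ⟨_, rfl⟩
  rw [← he, ← hr]
  rw [← he, ← hr] at hR
  have heb : ∀ q, b e q = 0 := by
    intro q
    simp [he, hub q, huhb q]
  have hδ : ∀ v, c u u v - c uh uh v = c e u v + c uh e v := by
    intro v
    simp [he]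
  have hψ : ψ = 0 := by
    have := hR 0 ψ
    simp [heb] at this
    exact this
  have hR' : ∀ v, ν * ⟪Φ, v⟫ = ν * ⟪e, v⟫ + b v r + (c e u v + c uh e v) := by
    intro v
    have := hR v 0
    rw [hδ] at this
    simpa using this
  have h1 : ∀ v, |c e u v| ≤ (1 - g) * ν * ‖e‖ * ‖v‖ := by
    intro v
    calc |c e u v| ≤ K * ‖e‖ * ‖u‖ * ‖v‖ := hcK _ _ _
      _ = (K * ‖u‖) * ‖e‖ * ‖v‖ := by ring
      _ ≤ _ := by gcongr
  have h2 : ∀ v, |c uh e v| ≤ ν * ‖e‖ * ‖v‖ := by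
    intro v
    refine (hcK _ _ _).trans ?_
    gcongr
  have h1' : ∀ v, |c e u v| ≤ ν * ‖e‖ * ‖v‖ := by
    intro v
    refine (h1 v).trans ?_
    gcongr
    nlinarith
  have heΦ : g * ‖e‖ ≤ ‖Φ‖ := by
    have h3 := hR' e
    rw [heb, hskew uh huhb e, real_inner_self_eq_norm_sq] at h3
    have h4 := real_inner_le_norm Φ e
    have h5 := (abs_le.mp (h1 e)).1
    have h6 : ν * ⟪Φ, e⟫ ≤ ν * (‖Φ‖ * ‖e‖) := by gcongr
    rcases (norm_nonneg e).eq_or_lt with h | h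
    · rw [← h]; simp
    · have : (g * ‖e‖) * (ν * ‖e‖) ≤ ‖Φ‖ * (ν * ‖e‖) := by nlinarith
      exact le_of_mul_le_mul_right this (by positivity)
  have hr1 : β * ‖r‖ ≤ ν * (‖Φ‖ + 3 * ‖e‖) := by
    refine (hinf r).trans (Real.iSup_le ?_ (by positivity))
    rintro ⟨v, hv⟩
    have hv' : 0 < ‖v‖ := norm_pos_iff.mpr hv
    rw [div_le_iff₀ hv']
    have h3 := hR' v
    have h4 := (abs_le.mp (h1' v)).1
    have h5 := (abs_le.mp (h2 v)).1
    have h6 : ν * ⟪Φ, v⟫ ≤ ν * (‖Φ‖ * ‖v‖) := by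
      gcongr; exact real_inner_le_norm Φ v
    have h7 : ν * (-(‖e‖ * ‖v‖)) ≤ ν * ⟪e, v⟫ := by
      gcongr; exact (abs_le.mp (abs_real_inner_le_norm e v)).1
    nlinarith
  have hΦ1 : ν * ‖Φ‖ ≤ 3 * ν * ‖e‖ + M * ‖r‖ := by
    have h3 := hR' Φ
    rw [real_inner_self_eq_norm_sq] at h3
    have h4 := (abs_le.mp (h1' Φ)).2
    have h5 := (abs_le.mp (h2 Φ)).2
    have h6 : ν * ⟪e, Φ⟫ ≤ ν * (‖e‖ * ‖Φ‖) := by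
      gcongr; exact real_inner_le_norm e Φ
    have h7 : b Φ r ≤ M * ‖Φ‖ * ‖r‖ := by
      refine (le_abs_self _).trans ((b.le_opNorm₂ Φ r).trans ?_)
      have : ‖b‖ ≤ M := hb.trans (hM ▸ le_max_left _ _)
      gcongr
    rcases (norm_nonneg Φ).eq_or_lt with h | h
    · rw [← h, mul_zero]; positivity
    · have : (ν * ‖Φ‖) * ‖Φ‖ ≤ (3 * ν * ‖e‖ + M * ‖r‖) * ‖Φ‖ := by nlinarith
      exact le_of_mul_le_mul_right this h
  rw [hψ, norm_zero]
  constructor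
  · rw [one_div, inv_mul_le_iff₀ (by positivity)]
    have h3 : (ν * ‖Φ‖) ^ 2 ≤ (3 * ν * ‖e‖ + M * ‖r‖) ^ 2 := by gcongr
    have h4 : (ν * ‖Φ‖) ^ 2 ≤ 18 * ν ^ 2 * ‖e‖ ^ 2 + 2 * M ^ 2 * ‖r‖ ^ 2 := by
      nlinarith [sq_nonneg (3 * ν * ‖e‖ - M * ‖r‖)]
    have h5 : (18 + 2 * M ^ 2 / ν) * (ν * ‖e‖ ^ 2 + ‖r‖ ^ 2)
        = (18 * ν ^ 2 * ‖e‖ ^ 2 + 2 * M ^ 2 * ‖r‖ ^ 2) / ν + (2 * M ^ 2 * ‖e‖ ^ 2 + 18 * ‖r‖ ^ 2) := by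
      field_simp
      ring
    have h6 : ν * ‖Φ‖ ^ 2 = (ν * ‖Φ‖) ^ 2 / ν := by field_simp
    have h7 : (ν * ‖Φ‖) ^ 2 / ν ≤ (18 * ν ^ 2 * ‖e‖ ^ 2 + 2 * M ^ 2 * ‖r‖ ^ 2) / ν := by gcongr
    have h8 : 0 ≤ 2 * M ^ 2 * ‖e‖ ^ 2 + 18 * ‖r‖ ^ 2 := by positivity
    rw [h5]
    linarith
  · have h3 : ‖e‖ ≤ ‖Φ‖ / g := by
      rw [le_div_iff₀ hg0]; linarith
    have h4 : ‖r‖ ≤ 4 * ν * ‖Φ‖ / (g * β) := by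
      rw [le_div_iff₀ (by positivity)]
      have h5 : g * (β * ‖r‖) ≤ g * (ν * (‖Φ‖ + 3 * ‖e‖)) := by gcongr
      have h6 : g * ‖Φ‖ ≤ 1 * ‖Φ‖ := by gcongr
      have h7 : ν * (g * ‖Φ‖ + 3 * (g * ‖e‖)) ≤ ν * (4 * ‖Φ‖) := by
        gcongr; linarith
      linarith
    calc ν * ‖e‖ ^ 2 + ‖r‖ ^ 2 ≤ ν * (‖Φ‖ / g) ^ 2 + (4 * ν * ‖Φ‖ / (g * β)) ^ 2 := by gcongr
      _ = _ := by field_simp; ring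
end

section
/- One has ψ = 0, and consequently ν‖e_u‖_V² + ‖e_p‖_Q² ≤ C₂·R^{NS}[(e_u,e_p),(Φ,0)], where C₂ is the constant in the upper norm-equivalence bound (depending only on ν, Ĉ, β, the continuity constant of b, γ and θ). -/
open scoped RealInnerProductSpace

/-- One has `ψ = 0`, and consequently
`ν‖e_u‖² + ‖e_p‖² ≤ C₂·R^{NS}[(e_u,e_p),(Φ,0)]`, where `C₂` is the constant in
the upper norm-equivalence bound (depending only on `ν`, `Ĉ`, `β`, the
continuity constant of `b`, `γ` and `θ`). -/
theorem auxiliary_pressure_vanishes_and_error_bound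
    {V Q : Type*}
    [NormedAddCommGroup V] [InnerProductSpace ℝ V] [CompleteSpace V]
    [NormedAddCommGroup Q] [InnerProductSpace ℝ Q] [CompleteSpace Q]
    (ν Chat β Cb γ θ : ℝ)
    (hν : 0 < ν) (hβ : 0 < β) (hγ : γ < 1) (hθ0 : 0 ≤ θ) (hθ1 : θ < 1) :
    ∃ C₂ > (0 : ℝ),
      ∀ (b : V →L[ℝ] Q →L[ℝ] ℝ)
        (c : V →L[ℝ] V →L[ℝ] V →L[ℝ] ℝ)
        (f : V →L[ℝ] ℝ)
        (u uh Φ : V) (p ph ψ : Q),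
        ‖b‖ ≤ Cb →
        (∀ q : Q, β * ‖q‖ ≤ ⨆ v : {v : V // v ≠ 0}, b (v : V) q / ‖(v : V)‖) →
        (∀ w x v : V, |c w x v| ≤ Chat * ‖w‖ * ‖x‖ * ‖v‖) →
        (∀ w : V, (∀ q : Q, b w q = 0) → ∀ v : V, c w v v = 0) →
        Chat * ‖f‖ / ν ^ 2 = γ →
        (∀ v : V, ν * ⟪u, v⟫ + c u u v + b v p = f v) →
        (∀ q : Q, b u q = 0) →
        (∀ q : Q, b uh q = 0) →
        Chat * ‖uh‖ ≤ θ * ν →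
        (∀ v : V, ∀ q : Q,
          ν * ⟪Φ, v⟫ + ⟪ψ, q⟫ =
            ν * ⟪u - uh, v⟫ + b v (p - ph) + b (u - uh) q +
              (c u u v - c uh uh v)) →
        ψ = 0 ∧
        ν * ‖u - uh‖ ^ 2 + ‖p - ph‖ ^ 2 ≤
          C₂ * (ν * ⟪u - uh, Φ⟫ + b Φ (p - ph) + b (u - uh) (0 : Q) +
            (c u u Φ - c uh uh Φ)) := by
  have h1θ : 0 < 1 - θ := by linarith
  obtain ⟨s, hs⟩ : ∃ s, s = 1 / (1 - θ) := ⟨_, rfl⟩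
  have hs0 : 0 < s := by rw [hs]; positivity
  obtain ⟨t, ht⟩ : ∃ t, t = ν * (1 + 3 * s) / β := ⟨_, rfl⟩
  have ht0 : 0 < t := by rw [ht]; positivity
  refine ⟨s ^ 2 + t ^ 2 / ν, by positivity, ?_⟩
  intro b c f u uh Φ p ph ψ _ hinf hc hskew hγe hu hbu hbuh huh hΦ
  have hbe : ∀ q : Q, b (u - uh) q = 0 := by
    intro q
    simp [hbu q, hbuh q]
  have hψ : ψ = 0 := by
    have h := hΦ 0 ψ
    simp only [hbe] at h
    simpa using h
  refine ⟨hψ, ?_⟩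
  have hR : ν * ⟪u - uh, Φ⟫ + b Φ (p - ph) + b (u - uh) (0 : Q) +
      (c u u Φ - c uh uh Φ) = ν * ‖Φ‖ ^ 2 := by
    rw [← hΦ Φ 0, inner_zero_right, real_inner_self_eq_norm_sq, add_zero]
  rw [hR]
  have hv : ∀ v : V, ν * ⟪Φ, v⟫ = ν * ⟪u - uh, v⟫ + b v (p - ph) +
      (c (u - uh) u v + c uh (u - uh) v) := by
    intro v
    have h := hΦ v 0
    simp only [inner_zero_right, map_zero, add_zero] at h
    rw [h]
    simp only [map_sub, _root_.sub_apply]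
    ring
  -- velocity bound
  have hu1 : Chat * ‖u‖ ≤ ν := by
    rcases le_total Chat 0 with hC | hC
    · have := mul_nonpos_of_nonpos_of_nonneg hC (norm_nonneg u)
      linarith
    · have h1 : ν * ‖u‖ ^ 2 ≤ ‖f‖ * ‖u‖ := by
        have h := hu u
        rw [hskew u hbu u, hbu p, real_inner_self_eq_norm_sq] at h
        have h2 := (le_abs_self (f u)).trans (f.le_opNorm u)
        linarith
      have h2 : ν * ‖u‖ ≤ ‖f‖ := by
        rcases (norm_nonneg u).eq_or_lt with h0 | h0
        · rw [← h0, mul_zero]; exact norm_nonneg f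
        · refine le_of_mul_le_mul_right ?_ h0
          linarith
      have h3 : Chat * ‖f‖ = γ * ν ^ 2 := by
        rw [← hγe]; field_simp
      have h4 : Chat * (ν * ‖u‖) ≤ Chat * ‖f‖ := mul_le_mul_of_nonneg_left h2 hC
      have h5 : γ * ν ^ 2 ≤ 1 * ν ^ 2 := mul_le_mul_of_nonneg_right hγ.le (by positivity)
      refine le_of_mul_le_mul_right ?_ hν
      linarith
  have huh1 : Chat * ‖uh‖ ≤ ν := huh.trans (by nlinarith)
  obtain ⟨e, he⟩ : ∃ e, e = u - uh := ⟨_, rfl⟩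
  obtain ⟨r, hr⟩ : ∃ r, r = p - ph := ⟨_, rfl⟩
  rw [← he] at hbe
  simp only [← he, ← hr] at hv
  rw [← he, ← hr]
  have hE : ‖e‖ ≤ s * ‖Φ‖ := by
    have h := hv e
    rw [hbe r, real_inner_self_eq_norm_sq] at h
    have h1 : c e u e + c uh e e = c e uh e := by
      rw [hskew uh hbuh e, add_zero]
      have : u = uh + e := by rw [he]; abel
      have h2 : c e u e = c e uh e + c e e e := by
        conv_lhs => rw [this]
        simp only [map_add, ContinuousLinearMap.add_apply]
      rw [h2, hskew e hbe e, add_zero]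
    rw [h1] at h
    have h3 := neg_le_of_abs_le (hc e uh e)
    have h4 : Chat * ‖uh‖ * ‖e‖ ^ 2 ≤ θ * ν * ‖e‖ ^ 2 :=
      mul_le_mul_of_nonneg_right huh (by positivity)
    have h5 : ν * ⟪Φ, e⟫ ≤ ν * (‖Φ‖ * ‖e‖) :=
      mul_le_mul_of_nonneg_left (real_inner_le_norm Φ e) hν.le
    have h6 : ν * ((1 - θ) * ‖e‖ ^ 2) ≤ ν * (‖Φ‖ * ‖e‖) := by linarith
    have h7 := le_of_mul_le_mul_left h6 hν
    have h8 : (1 - θ) * ‖e‖ ≤ ‖Φ‖ := by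
      rcases (norm_nonneg e).eq_or_lt with h0 | h0
      · rw [← h0, mul_zero]; exact norm_nonneg Φ
      · refine le_of_mul_le_mul_right ?_ h0
        linarith
    rw [hs, one_div, inv_mul_eq_div, le_div_iff₀ h1θ]
    linarith
  have hP : ‖r‖ ≤ t * ‖Φ‖ := by
    have hK : β * ‖r‖ ≤ ν * ‖Φ‖ + 3 * ν * ‖e‖ := by
      refine (hinf r).trans (Real.iSup_le ?_ (by positivity))
      rintro ⟨v, hv0⟩
      have hvp : 0 < ‖v‖ := norm_pos_iff.mpr hv0
      rw [div_le_iff₀ hvp]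
      change b v r ≤ _
      have h := hv v
      have h1 := neg_le_of_abs_le (hc e u v)
      have h2 := neg_le_of_abs_le (hc uh e v)
      have h3 : Chat * ‖u‖ * (‖e‖ * ‖v‖) ≤ ν * (‖e‖ * ‖v‖) :=
        mul_le_mul_of_nonneg_right hu1 (by positivity)
      have h4 : Chat * ‖uh‖ * (‖e‖ * ‖v‖) ≤ ν * (‖e‖ * ‖v‖) :=
        mul_le_mul_of_nonneg_right huh1 (by positivity)
      have h5 : ν * ⟪Φ, v⟫ ≤ ν * (‖Φ‖ * ‖v‖) :=
        mul_le_mul_of_nonneg_left (real_inner_le_norm Φ v) hν.le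
      have h6 : ν * (-(‖e‖ * ‖v‖)) ≤ ν * ⟪e, v⟫ :=
        mul_le_mul_of_nonneg_left (neg_le_of_abs_le (abs_real_inner_le_norm e v)) hν.le
      linarith
    have h2 : 3 * ν * ‖e‖ ≤ 3 * ν * (s * ‖Φ‖) :=
      mul_le_mul_of_nonneg_left hE (by positivity)
    rw [ht, div_mul_eq_mul_div, le_div_iff₀ hβ]
    linarith
  have h1 : ‖e‖ ^ 2 ≤ (s * ‖Φ‖) ^ 2 := pow_le_pow_left₀ (norm_nonneg _) hE 2
  have h2 : ‖r‖ ^ 2 ≤ (t * ‖Φ‖) ^ 2 := pow_le_pow_left₀ (norm_nonneg _) hP 2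
  have h3 : (s ^ 2 + t ^ 2 / ν) * (ν * ‖Φ‖ ^ 2) = ν * (s * ‖Φ‖) ^ 2 + (t * ‖Φ‖) ^ 2 := by
    field_simp
  rw [h3]
  exact add_le_add (mul_le_mul_of_nonneg_left h1 hν.le) h2
end

section
/- Suppose in addition that η ≥ 0 satisfies R^{NS}[(e_u,e_p),(Φ,0)] ≤ η‖Φ‖_V. Then ν‖Φ‖_V ≤ η and ν‖e_u‖_V² + ‖e_p‖_Q² ≤ C₂·η²/ν, where C₂ is the constant in the upper norm-equivalence bound (depending only on ν, Ĉ, β, the continuity constant of b, γ and θ). -/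
open scoped RealInnerProductSpace

/-- Suppose in addition that `η ≥ 0` satisfies
`R^{NS}[(e_u,e_p),(Φ,0)] ≤ η‖Φ‖_V`.  Then `ν‖Φ‖_V ≤ η` and
`ν‖e_u‖² + ‖e_p‖² ≤ C₂·η²/ν`, where `C₂` is the constant in the upper
norm-equivalence bound (depending only on `ν`, `Ĉ`, `β`, the continuity
constant of `b`, `γ` and `θ`). -/
theorem reliability_abstract_skeleton
    {V Q : Type*}
    [NormedAddCommGroup V] [InnerProductSpace ℝ V] [CompleteSpace V]
    [NormedAddCommGroup Q] [InnerProductSpace ℝ Q] [CompleteSpace Q]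
    (ν Chat β Cb γ θ : ℝ)
    (hν : 0 < ν) (hβ : 0 < β) (hγ : γ < 1) (hθ0 : 0 ≤ θ) (hθ1 : θ < 1) :
    ∃ C₂ > (0 : ℝ),
      ∀ (b : V →L[ℝ] Q →L[ℝ] ℝ)
        (c : V →L[ℝ] V →L[ℝ] V →L[ℝ] ℝ)
        (f : V →L[ℝ] ℝ)
        (u uh Φ : V) (p ph ψ : Q) (η : ℝ),
        ‖b‖ ≤ Cb →
        (∀ q : Q, β * ‖q‖ ≤ ⨆ v : {v : V // v ≠ 0}, b (v : V) q / ‖(v : V)‖) →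
        (∀ w x v : V, |c w x v| ≤ Chat * ‖w‖ * ‖x‖ * ‖v‖) →
        (∀ w : V, (∀ q : Q, b w q = 0) → ∀ v : V, c w v v = 0) →
        Chat * ‖f‖ / ν ^ 2 = γ →
        (∀ v : V, ν * ⟪u, v⟫ + c u u v + b v p = f v) →
        (∀ q : Q, b u q = 0) →
        (∀ q : Q, b uh q = 0) →
        Chat * ‖uh‖ ≤ θ * ν →
        (∀ v : V, ∀ q : Q,
          ν * ⟪Φ, v⟫ + ⟪ψ, q⟫ =
            ν * ⟪u - uh, v⟫ + b v (p - ph) + b (u - uh) q +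
              (c u u v - c uh uh v)) →
        0 ≤ η →
        (ν * ⟪u - uh, Φ⟫ + b Φ (p - ph) + b (u - uh) (0 : Q) +
            (c u u Φ - c uh uh Φ) ≤ η * ‖Φ‖) →
        ν * ‖Φ‖ ≤ η ∧
        ν * ‖u - uh‖ ^ 2 + ‖p - ph‖ ^ 2 ≤ C₂ * η ^ 2 / ν := by
  have ht : 0 < 1 - θ := by linarith
  refine ⟨(1 / (1 - θ)) ^ 2 + ν * ((1 + 3 / (1 - θ)) / β) ^ 2, by positivity, ?_⟩
  intro b c f u uh Φ p ph ψ η _ hinf hc hskew hg hu hbu hbuh hth hΦ hη hR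
  obtain ⟨e, he⟩ : ∃ e, e = u - uh := ⟨_, rfl⟩
  obtain ⟨r, hr⟩ : ∃ r, r = p - ph := ⟨_, rfl⟩
  simp only [← he, ← hr] at hΦ hR ⊢
  have hbe : ∀ q, b e q = 0 := by
    intro q
    rw [he]
    simp [hbu q, hbuh q]
  have hδ : ∀ v, c u u v - c uh uh v = c u e v + c e uh v := by
    intro v
    rw [he]
    simp only [map_sub, sub_apply]
    ring
  have h1 : ν * ‖Φ‖ ≤ η := by
    have h := hΦ Φ 0
    rw [real_inner_self_eq_norm_sq, inner_zero_right] at h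
    rcases (norm_nonneg Φ).eq_or_lt with h0 | h0
    · rw [← h0]; simpa using hη
    · have : (ν * ‖Φ‖) * ‖Φ‖ ≤ η * ‖Φ‖ := by nlinarith
      exact le_of_mul_le_mul_right this h0
  have h2 : (1 - θ) * ‖e‖ ≤ ‖Φ‖ := by
    have h := hΦ e 0
    rw [real_inner_self_eq_norm_sq, inner_zero_right, hbe, hbe, hδ, hskew u hbu] at h
    have hc1 := (abs_le.1 (hc e uh e)).1
    have hin := real_inner_le_norm Φ e
    rcases (norm_nonneg e).eq_or_lt with h0 | h0
    · rw [← h0]; simp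
    · have a1 : Chat * ‖e‖ * ‖uh‖ * ‖e‖ ≤ θ * ν * ‖e‖ ^ 2 := by
        have := mul_le_mul_of_nonneg_right hth (sq_nonneg ‖e‖)
        linarith
      have a2 : ν * ⟪Φ, e⟫ ≤ ν * (‖Φ‖ * ‖e‖) := mul_le_mul_of_nonneg_left hin hν.le
      have : ((1 - θ) * ‖e‖) * (ν * ‖e‖) ≤ ‖Φ‖ * (ν * ‖e‖) := by nlinarith
      exact le_of_mul_le_mul_right this (by positivity)
  have h3 : Chat * ‖u‖ ≤ ν := by
    rcases le_or_gt Chat 0 with hC | hC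
    · nlinarith [norm_nonneg u]
    · have h := hu u
      rw [real_inner_self_eq_norm_sq, hskew u hbu, hbu] at h
      have hf : f u ≤ ‖f‖ * ‖u‖ := (le_abs_self _).trans (f.le_opNorm u)
      have hfu : ν * ‖u‖ ≤ ‖f‖ := by
        rcases (norm_nonneg u).eq_or_lt with h0 | h0
        · rw [← h0]; simp
        · have : (ν * ‖u‖) * ‖u‖ ≤ ‖f‖ * ‖u‖ := by nlinarith
          exact le_of_mul_le_mul_right this h0
      have hg' : Chat * ‖f‖ < ν ^ 2 := by
        rw [← hg, div_lt_one (by positivity)] at hγ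
        exact hγ
      have : (Chat * ‖u‖) * ν ≤ ν * ν := by
        have := mul_le_mul_of_nonneg_left hfu hC.le
        nlinarith
      exact le_of_mul_le_mul_right this hν
  have h4 : Chat * ‖uh‖ ≤ ν := by nlinarith
  have h5 : β * ‖r‖ ≤ ν * ‖Φ‖ + 3 * ν * ‖e‖ := by
    refine (hinf r).trans (Real.iSup_le ?_ (by positivity))
    rintro ⟨v, hv⟩
    have hv' : 0 < ‖v‖ := norm_pos_iff.2 hv
    rw [div_le_iff₀ hv']
    have h := hΦ v 0
    rw [inner_zero_right, hbe, hδ] at h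
    have c1 := (abs_le.1 (hc u e v)).1
    have c2 := (abs_le.1 (hc e uh v)).1
    have i1 := mul_le_mul_of_nonneg_left (real_inner_le_norm Φ v) hν.le
    have i2 := mul_le_mul_of_nonneg_left (abs_le.1 (abs_real_inner_le_norm e v)).1 hν.le
    have p0 : 0 ≤ ‖e‖ * ‖v‖ := by positivity
    have m1 := mul_le_mul_of_nonneg_right h3 p0
    have m2 := mul_le_mul_of_nonneg_right h4 p0
    show b v r ≤ _
    linarith
  refine ⟨h1, ?_⟩
  have h6 : ‖e‖ ≤ (1 / (1 - θ)) * (η / ν) := by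
    have : ‖Φ‖ ≤ η / ν := by rw [le_div_iff₀ hν]; linarith
    rw [one_div, inv_mul_eq_div, le_div_iff₀ ht]
    linarith
  have h7 : ‖r‖ ≤ ((1 + 3 / (1 - θ)) / β) * η := by
    have a : ν * ‖e‖ ≤ (1 / (1 - θ)) * η := by
      calc ν * ‖e‖ ≤ ν * ((1 / (1 - θ)) * (η / ν)) := mul_le_mul_of_nonneg_left h6 hν.le
        _ = _ := by field_simp
    rw [div_mul_eq_mul_div, le_div_iff₀ hβ]
    have : 3 / (1 - θ) = 3 * (1 / (1 - θ)) := by ring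
    rw [this]
    linarith
  have s6 := mul_le_mul_of_nonneg_left (pow_le_pow_left₀ (norm_nonneg e) h6 2) hν.le
  have s7 := pow_le_pow_left₀ (norm_nonneg r) h7 2
  calc ν * ‖e‖ ^ 2 + ‖r‖ ^ 2 ≤ _ := add_le_add s6 s7
    _ = _ := by field_simp
end
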